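/- Let w₀, w₁, w₂, … be elements of W(A, Σ) (closed A-words) such that each w_{i+1} is a nonempty factor of w_i, and let Π₀, Π₁, Π₂, … be the corresponding groups of proper periods. Then the sequence of groups becomes stationary: there exists m with Πₙ = Πₘ for all n ≥ m. -/

import Mathlib

namespace Stmt11

/-- `A = ℤ[t]` as additive group: finitely supported `ℕ → ℤ`. Positivity: the leading
coefficient is positive. -/
def apos (a : ℕ →₀ ℤ) : Prop := ∃ d : ℕ, a.support.max = (d : WithBot ℕ) ∧ 0 < a d

/-- `a ≤ b` iff `a = b` or `b - a` is positive. -/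
def ale (a b : ℕ →₀ ℤ) : Prop := a = b ∨ apos (b - a)

/-- The least positive element `1 = t⁰`. -/
noncomputable def aone : ℕ →₀ ℤ := Finsupp.single 0 1

/-- A closed `A`-word over the alphabet `Γ`: a length `len` together with a labelling of
the interval `[1, len]` (values outside the interval are irrelevant). -/
structure AWord (Γ : Type*) where
  len : ℕ →₀ ℤ
  f : (ℕ →₀ ℤ) → Γ

/-- `v` is a factor of `u`: some shifted copy of `v` occurs inside `u`. -/
def IsFactor {Γ : Type*} (v u : AWord Γ) : Prop :=
  ∃ δ : ℕ →₀ ℤ, ale 0 δ ∧ ale (δ + v.len) u.len ∧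
    ∀ β, ale aone β → ale β v.len → v.f β = u.f (β + δ)

/-- The set of proper periods of a word: periods of degree strictly smaller than the
degree of the word. -/
def properPeriods {Γ : Type*} (u : AWord Γ) : Set (ℕ →₀ ℤ) :=
  {π | π.support.max < u.len.support.max ∧
    ∀ β, ale aone β → ale β u.len → ale aone (β + π) → ale (β + π) u.len →
      u.f β = u.f (β + π)}

theorem apos_iff (a : ℕ →₀ ℤ) : apos a ↔ ∃ d : ℕ, 0 < a d ∧ ∀ j, d < j → a j = 0 := by
  unfold apos
  constructor
  · rintro ⟨d, hd, h⟩
    refine ⟨d, h, fun j hj => ?_⟩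
    by_contra hne
    have h1 : (j : WithBot ℕ) ≤ a.support.max := Finset.le_max (by simpa using hne)
    rw [hd] at h1
    have : j ≤ d := Nat.cast_le.1 h1
    omega
  · rintro ⟨d, h, hj⟩
    refine ⟨d, le_antisymm ?_ (Finset.le_max (by simpa using h.ne')), h⟩
    refine Finset.max_le fun j hjs => ?_
    refine Nat.cast_le.2 ?_
    by_contra hlt
    exact (by simpa using hjs : a j ≠ 0) (hj j (not_le.1 hlt))

theorem apos_add {a b : ℕ →₀ ℤ} (ha : apos a) (hb : apos b) : apos (a + b) := by
  rw [apos_iff] at *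
  obtain ⟨d, h1, h2⟩ := ha
  obtain ⟨e, h3, h4⟩ := hb
  rcases lt_trichotomy d e with h | h | h
  · refine ⟨e, ?_, fun j hj => ?_⟩
    · simp [h2 e h, h3]
    · simp [h2 j (h.trans hj), h4 j hj]
  · subst h
    refine ⟨d, ?_, fun j hj => ?_⟩
    · simp; omega
    · simp [h2 j hj, h4 j hj]
  · refine ⟨d, ?_, fun j hj => ?_⟩
    · simp [h4 d h, h1]
    · simp [h4 j (h.trans hj), h2 j hj]

theorem not_apos_zero : ¬ apos 0 := by
  rw [apos_iff]; rintro ⟨d, h, _⟩; simp at h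

theorem apos_tri (a : ℕ →₀ ℤ) : a = 0 ∨ apos a ∨ apos (-a) := by
  by_cases h : a = 0
  · exact Or.inl h
  right
  have hs : a.support.Nonempty := Finsupp.support_nonempty_iff.2 h
  have hm := a.support.max'_mem hs
  have hmax : a.support.max = (a.support.max' hs : WithBot ℕ) := (Finset.coe_max' hs).symm
  have h0 : a (a.support.max' hs) ≠ 0 := by simpa using hm
  rcases lt_or_gt_of_ne h0 with h1 | h1
  · right
    refine ⟨a.support.max' hs, ?_, ?_⟩
    · rw [Finsupp.support_neg]; exact hmax
    · simpa using h1
  · left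
    exact ⟨_, hmax, h1⟩

theorem ale_one_iff (a : ℕ →₀ ℤ) : ale aone a ↔ apos a := by
  unfold ale aone
  constructor
  · rintro (rfl | h)
    · rw [apos_iff]
      exact ⟨0, by simp, fun j hj => by simp [Finsupp.single_apply]; omega⟩
    · have h1 : apos (Finsupp.single 0 1 : ℕ →₀ ℤ) := by
        rw [apos_iff]
        exact ⟨0, by simp, fun j hj => by simp [Finsupp.single_apply]; omega⟩
      have := apos_add h1 h
      simpa using this
  · intro h
    by_contra hc
    push Not at hc
    rcases apos_tri (a - Finsupp.single 0 1) with h1 | h1 | h1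
    · exact hc.1 (sub_eq_zero.1 h1).symm
    · exact hc.2 h1
    · rw [apos_iff] at h h1
      obtain ⟨d, h2, h3⟩ := h
      obtain ⟨e, h4, h5⟩ := h1
      have key : ∀ j, 0 < j → (-(a - Finsupp.single 0 1) : ℕ →₀ ℤ) j = - a j := by
        intro j hj
        have : (Finsupp.single 0 1 : ℕ →₀ ℤ) j = 0 := by
          simp [Finsupp.single_apply]; omega
        simp only [Finsupp.neg_apply, Finsupp.sub_apply, this, sub_zero]
      have k0 : (-(a - Finsupp.single 0 1) : ℕ →₀ ℤ) 0 = 1 - a 0 := by simp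
      rcases Nat.eq_zero_or_pos e with he | he
      · subst he
        rw [k0] at h4
        rcases Nat.eq_zero_or_pos d with hd | hd
        · subst hd; omega
        · have := h5 d hd
          rw [key d hd] at this; omega
      · rw [key e he] at h4
        rcases lt_trichotomy d e with h6 | h6 | h6
        · have := h3 e h6; omega
        · subst h6; omega
        · have := h5 d h6
          rw [key d (by omega)] at this; omega

theorem ale_trans {a b c : ℕ →₀ ℤ} (h : ale a b) (h' : ale b c) : ale a c := by
  rcases h with rfl | h
  · exact h'
  · rcases h' with rfl | h'
    · exact Or.inr h
    · right
      have := apos_add h h'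
      rwa [show b - a + (c - b) = c - a by abel] at this

theorem ale_add_right {a b : ℕ →₀ ℤ} (c : ℕ →₀ ℤ) (h : ale a b) : ale (a + c) (b + c) := by
  rcases h with rfl | h
  · exact Or.inl rfl
  · right; rwa [show b + c - (a + c) = b - a by abel]

theorem apos_of_ale {a b : ℕ →₀ ℤ} (h : apos a) (h' : ale a b) : apos b := by
  rcases h' with rfl | h'
  · exact h
  · simpa using apos_add h h'

theorem not_ale {a b : ℕ →₀ ℤ} (h : ¬ ale a b) : apos (a - b) := by
  unfold ale at h
  push Not at h
  rcases apos_tri (a - b) with h1 | h1 | h1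
  · exact absurd (sub_eq_zero.1 h1) h.1
  · exact h1
  · rw [neg_sub] at h1; exact absurd h1 h.2

theorem not_apos {a : ℕ →₀ ℤ} (h : ¬ apos a) : ale 0 (-a) := by
  rcases apos_tri a with h1 | h1 | h1
  · subst h1; left; simp
  · exact absurd h1 h
  · right; simpa using h1

theorem apos_add_ale {a b : ℕ →₀ ℤ} (h : apos a) (h' : ale 0 b) : apos (a + b) := by
  rcases h' with rfl | h'
  · simpa using h
  · rw [sub_zero] at h'; exact apos_add h h'

theorem ale_zero_sub {a b : ℕ →₀ ℤ} (h : ale a b) : ale 0 (b - a) := by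
  rcases h with rfl | h
  · left; simp
  · right; simpa using h

theorem deg_le {a b : ℕ →₀ ℤ} (ha : apos a) (h : ale a b) :
    a.support.max ≤ b.support.max := by
  rcases h with rfl | h
  · exact le_rfl
  obtain ⟨c, rfl⟩ : ∃ c, b = a + c := ⟨b - a, by abel⟩
  rw [add_sub_cancel_left] at h
  obtain ⟨d, h1, h2⟩ := ha
  rw [apos_iff] at h
  obtain ⟨e, h3, h4⟩ := h
  rw [h1]
  have h5 : ∀ j, d < j → a j = 0 := by
    intro j hj
    by_contra hne
    have h6 : (j : WithBot ℕ) ≤ a.support.max := Finset.le_max (by simpa using hne)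
    rw [h1] at h6
    have : j ≤ d := Nat.cast_le.1 h6
    omega
  rcases lt_or_ge d e with h6 | h6
  · refine le_trans (Nat.cast_le.2 h6.le) (Finset.le_max (a := e) ?_)
    have := h5 e h6
    simp only [Finsupp.mem_support_iff, Finsupp.add_apply]; omega
  · refine Finset.le_max (a := d) ?_
    have h8 : 0 < a d := by assumption
    have : 0 ≤ c d := by
      rcases h6.eq_or_lt with h7 | h7
      · subst h7; exact h3.le
      · exact (h4 d h7).ge
    have h9 : a d + c d ≠ 0 := by omega
    simpa only [Finsupp.mem_support_iff, Finsupp.add_apply] using h9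

theorem deg_lt_iff (a : ℕ →₀ ℤ) (d : ℕ) :
    a.support.max < (d : WithBot ℕ) ↔ a ∈ Finsupp.supported ℤ ℤ (Set.Iio d) := by
  rw [Finsupp.mem_supported]
  constructor
  · intro h j hj
    exact WithBot.coe_lt_coe.1 (lt_of_le_of_lt (Finset.le_max hj) h)
  · intro h
    rw [Finset.max_eq_sup_withBot]
    refine (Finset.sup_lt_iff (WithBot.bot_lt_coe d)).2 ?_
    intro j hj
    exact WithBot.coe_lt_coe.2 (h hj)

/-- The subgroup of proper periods. -/
def perGroup {Γ : Type*} (u : AWord Γ) (hu : apos u.len) : AddSubgroup (ℕ →₀ ℤ) where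
  carrier := properPeriods u
  zero_mem' := by
    refine ⟨?_, fun β _ _ _ _ => by simp⟩
    obtain ⟨d, h, _⟩ := hu
    rw [h, deg_lt_iff]; exact zero_mem _
  neg_mem' := by
    rintro π ⟨h1, h2⟩
    refine ⟨by rwa [Finsupp.support_neg], fun β a b c d => ?_⟩
    have := h2 (β + -π) c d (by simpa using a) (by simpa using b)
    rw [this]; simp
  add_mem' := by
    rintro π ρ ⟨h1, h2⟩ ⟨h3, h4⟩
    obtain ⟨d, hd, hpos⟩ := hu
    have far : ∀ a b : ℕ →₀ ℤ, a.support.max < u.len.support.max →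
        b.support.max < u.len.support.max → ¬ apos (a - b - u.len) := by
      intro a b ha hb hab
      rw [hd, deg_lt_iff] at ha hb
      have hm := sub_mem ha hb
      rw [← deg_lt_iff] at hm
      have hl : apos u.len := ⟨d, hd, hpos⟩
      have := deg_le hl (Or.inr hab)
      rw [hd] at this
      exact absurd hm (not_lt.2 this)
    refine ⟨?_, fun β a b c e => ?_⟩
    · rw [hd, deg_lt_iff] at h1 h3 ⊢
      exact add_mem h1 h3
    · by_cases hA : ale aone (β + π) ∧ ale (β + π) u.len
      · rw [h2 β a b hA.1 hA.2, h4 (β + π) hA.1 hA.2 (by rwa [add_assoc]) (by rwa [add_assoc]),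
          add_assoc]
      by_cases hB : ale aone (β + ρ) ∧ ale (β + ρ) u.len
      · have hc : β + (π + ρ) = β + ρ + π := by abel
        rw [hc] at c e ⊢
        rw [h4 β a b hB.1 hB.2, h2 (β + ρ) hB.1 hB.2 c e]
      exfalso
      simp only [ale_one_iff] at a c hA hB
      have hA' : ale 0 (-(β + π)) ∨ apos (β + π - u.len) := by
        by_cases h : apos (β + π)
        · exact Or.inr (not_ale fun h' => hA ⟨h, h'⟩)
        · exact Or.inl (not_apos h)
      have hB' : ale 0 (-(β + ρ)) ∨ apos (β + ρ - u.len) := by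
        by_cases h : apos (β + ρ)
        · exact Or.inr (not_ale fun h' => hB ⟨h, h'⟩)
        · exact Or.inl (not_apos h)
      rcases hA' with hA' | hA' <;> rcases hB' with hB' | hB'
      · have := apos_add_ale (apos_add_ale (apos_add a c) hA') hB'
        rw [show β + (β + (π + ρ)) + -(β + π) + -(β + ρ) = 0 by abel] at this
        exact not_apos_zero this
      · have := apos_add_ale hB' hA'
        rw [show β + ρ - u.len + -(β + π) = ρ - π - u.len by abel] at this
        exact far _ _ h3 h1 this
      · have := apos_add_ale hA' hB'
        rw [show β + π - u.len + -(β + ρ) = π - ρ - u.len by abel] at this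
        exact far _ _ h1 h3 this
      · have := apos_add_ale (apos_add_ale (apos_add hA' hB') (ale_zero_sub b)) (ale_zero_sub e)
        rw [show β + π - u.len + (β + ρ - u.len) + (u.len - β) + (u.len - (β + (π + ρ))) = 0
          by abel] at this
        exact not_apos_zero this

theorem ale_len {Γ : Type*} {v u : AWord Γ} (h : IsFactor v u) : ale v.len u.len := by
  obtain ⟨δ, h1, h2, _⟩ := h
  have := ale_add_right v.len h1
  rw [zero_add] at this
  exact ale_trans this h2

theorem periods_mono {Γ : Type*} {v u : AWord Γ} (h : IsFactor v u)
    (hdeg : v.len.support.max = u.len.support.max) : properPeriods u ⊆ properPeriods v := by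
  obtain ⟨δ, h1, h2, h3⟩ := h
  rintro π ⟨p1, p2⟩
  refine ⟨by rwa [hdeg], fun β a b c d => ?_⟩
  have lo : ∀ x, ale aone x → ale aone (x + δ) := fun x hx => by
    rw [ale_one_iff] at *; exact apos_add_ale hx h1
  have hi : ∀ x, ale x v.len → ale (x + δ) u.len := fun x hx => by
    have := ale_add_right δ hx
    rw [add_comm v.len] at this
    exact ale_trans this h2
  have hc : β + π + δ = β + δ + π := by abel
  rw [h3 β a b, h3 (β + π) c d, hc]
  exact p2 _ (lo _ a) (hi _ b) (hc ▸ lo _ c) (hc ▸ hi _ d)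

/-- If `w₀, w₁, w₂, …` are closed `A`-words (`A = ℤ[t]`) such that
each `w_{i+1}` is a nonempty factor of `w_i`, then the corresponding sequence of groups
of proper periods becomes stationary. -/
theorem proper_period_groups_stationary {Γ : Type*} (w : ℕ → AWord Γ)
    (hne : ∀ i, ale aone (w i).len)
    (hfac : ∀ i, IsFactor (w (i + 1)) (w i)) :
    ∃ m, ∀ n, m ≤ n → properPeriods (w n) = properPeriods (w m) := by
  simp only [ale_one_iff] at hne
  have hanti : Antitone fun i => (w i).len.support.max :=
    antitone_nat_of_succ_le fun i => deg_le (hne _) (ale_len (hfac i))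
  obtain ⟨N, hN⟩ : ∃ N, ∀ n, N ≤ n → (w n).len.support.max = (w N).len.support.max := by
    obtain ⟨N, hN⟩ := exists_minimalFor_of_wellFoundedLT (fun _ : ℕ => True)
      (fun i => (w i).len.support.max) ⟨0, trivial⟩
    exact ⟨N, fun n hn => le_antisymm (hanti hn) (hN.2 trivial (hanti hn))⟩
  obtain ⟨d, hd, -⟩ := hne N
  let S := Finsupp.supported ℤ ℤ (Set.Iio d)
  have : IsNoetherian ℤ S :=
    isNoetherian_of_linearEquiv (Finsupp.supportedEquivFinsupp (M := ℤ) (R := ℤ) (Set.Iio d)).symm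
  let F : ℕ →o Submodule ℤ S :=
    { toFun := fun i => ((perGroup (w (N + i)) (hne _)).toIntSubmodule).comap S.subtype
      monotone' := monotone_nat_of_le_succ fun i x hx =>
        periods_mono (hfac (N + i)) (by rw [hN (N + i + 1) (by omega), hN (N + i) (by omega)]) hx }
  obtain ⟨m, hm⟩ := monotone_stabilizes_iff_noetherian.2 ‹IsNoetherian ℤ S› F
  have key : ∀ i j, F i = F j → properPeriods (w (N + i)) ⊆ properPeriods (w (N + j)) := by
    intro i j hij x hx
    have hxS : x ∈ S := by
      rw [← deg_lt_iff, ← hd, ← hN (N + i) (by omega)]; exact hx.1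
    have h1 : (⟨x, hxS⟩ : S) ∈ F i := hx
    rw [hij] at h1
    exact h1
  refine ⟨N + m, fun n hn => ?_⟩
  obtain ⟨k, rfl⟩ : ∃ k, n = N + k := ⟨n - N, by omega⟩
  have := hm k (by omega)
  exact Set.Subset.antisymm (key _ _ this.symm) (key _ _ this)

end Stmt11
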